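/- arXiv:1905.02387 — 2 statements merged into one kernel-verified Lean document; each statement's English description precedes it below -/
import Mathlib

section
/- Let σ and π be king permutations such that π ≺ σ and (length of σ) − (length of π) > 3. Then there exists a king permutation τ such that π ≺ τ ≺ σ and (length of σ) − (length of τ) ∈ {1, 3}. -/
open Equiv

/-- The Manhattan distance between two elements of `Fin n`. -/
def fdist {n : ℕ} (a b : Fin n) : ℕ := ((a : ℤ) - (b : ℤ)).natAbs

/-- A king permutation: no two adjacent positions carry adjacent values. -/
def IsKing {n : ℕ} (σ : Equiv.Perm (Fin n)) : Prop :=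
  ∀ i j : Fin n, (j : ℕ) = (i : ℕ) + 1 → fdist (σ i) (σ j) ≠ 1

/-- Pattern containment `π ⪯ σ`. -/
def Contains {m n : ℕ} (π : Equiv.Perm (Fin m)) (σ : Equiv.Perm (Fin n)) : Prop :=
  ∃ f : Fin m ↪o Fin n, ∀ a b : Fin m, π a < π b ↔ σ (f a) < σ (f b)

/-- Strict pattern containment `π ≺ σ`. -/
def StrictContains {m n : ℕ} (π : Equiv.Perm (Fin m)) (σ : Equiv.Perm (Fin n)) : Prop :=
  Contains π σ ∧ m < n

/-- `nabla σ i` deletes the `i`-th entry of `σ` and standardizes. -/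
def nabla {n : ℕ} (σ : Equiv.Perm (Fin (n + 1))) (i : Fin (n + 1)) : Equiv.Perm (Fin n) :=
  Equiv.removeNone ((finSuccEquiv' i).symm.trans (σ.trans (finSuccEquiv' (σ i))))

/-- `nablaStar σ a` deletes the value `a` from `σ` and standardizes. -/
def nablaStar {n : ℕ} (σ : Equiv.Perm (Fin (n + 1))) (a : Fin (n + 1)) : Equiv.Perm (Fin n) :=
  nabla σ (σ⁻¹ a)

/-- The permutation [2413] (0-based one-line notation [1,3,0,2]). -/
def p2413 : Equiv.Perm (Fin 4) :=
  ⟨![1, 3, 0, 2], ![2, 0, 3, 1], by intro x; fin_cases x <;> rfl, by intro x; fin_cases x <;> rfl⟩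

/-- The permutation [3142] (0-based one-line notation [2,0,3,1]). -/
def p3142 : Equiv.Perm (Fin 4) :=
  ⟨![2, 0, 3, 1], ![1, 3, 0, 2], by intro x; fin_cases x <;> rfl, by intro x; fin_cases x <;> rfl⟩

/-- `σ i` vertically separates `σ j` from `σ k`. -/
def VSep {n : ℕ} (σ : Equiv.Perm (Fin n)) (i j k : Fin n) : Prop :=
  i ≠ j ∧ i ≠ k ∧ j ≠ k ∧ fdist i j = 1 ∧ fdist i k = 1 ∧ fdist (σ j) (σ k) = 1

/-- `σ i` horizontally separates `σ j` from `σ k`. -/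
def HSep {n : ℕ} (σ : Equiv.Perm (Fin n)) (i j k : Fin n) : Prop :=
  i ≠ j ∧ i ≠ k ∧ j ≠ k ∧ fdist (σ i) (σ j) = 1 ∧ fdist (σ i) (σ k) = 1 ∧ fdist j k = 1

/-- `σ i` separates `σ j` from `σ k`. -/
def Separates {n : ℕ} (σ : Equiv.Perm (Fin n)) (i j k : Fin n) : Prop :=
  VSep σ i j k ∨ HSep σ i j k

/-- `π` has a 2-block at positions `j`, `j+1` (0-based). -/
def HasTwoBlockAt {n : ℕ} (π : Equiv.Perm (Fin n)) (j : ℕ) : Prop :=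
  ∃ hj : j + 1 < n, fdist (π ⟨j, by omega⟩) (π ⟨j + 1, hj⟩) = 1

/-- `π` has a 3-block at positions `p`, `p+1`, `p+2` (0-based). -/
def HasThreeBlockAt {n : ℕ} (π : Equiv.Perm (Fin n)) (p : ℕ) : Prop :=
  ∃ hp : p + 2 < n, ∃ m : ℕ,
    ({(π ⟨p, by omega⟩ : ℕ), (π ⟨p + 1, by omega⟩ : ℕ), (π ⟨p + 2, by omega⟩ : ℕ)} : Finset ℕ)
      = {m, m + 1, m + 2}


def BtwZ (a x b : ℤ) : Prop := (a < x ∧ x < b) ∨ (b < x ∧ x < a)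

def Bond {α : Type} (p w : α → ℤ) (E : Finset α) (s t : α) : Prop :=
  s ≠ t ∧ s ∉ E ∧ t ∉ E ∧ (∀ u, BtwZ (p s) (p u) (p t) → u ∈ E) ∧
    (∀ u, BtwZ (w s) (w u) (w t) → u ∈ E)

def Sep1 {α : Type} (p w : α → ℤ) (x s t : α) : Prop :=
  p s + 1 = p x ∧ p x + 1 = p t ∧ (w t = w s + 1 ∨ w s = w t + 1)

def Conv {α : Type} (p : α → ℤ) : Prop :=
  ∀ a b k, p a < k → k < p b → ∃ c, p c = k

def King {α : Type} (p w : α → ℤ) : Prop :=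
  ∀ a b, (p b = p a + 1) → w b ≠ w a + 1 ∧ w a ≠ w b + 1

theorem Bond.symm {α : Type} {p w : α → ℤ} {E : Finset α} {s t : α} (h : Bond p w E s t) :
    Bond p w E t s := by
  obtain ⟨h1, h2, h3, h4, h5⟩ := h
  refine ⟨h1.symm, h3, h2, fun u hu => h4 u ?_, fun u hu => h5 u ?_⟩
  · unfold BtwZ at *; omega
  · unfold BtwZ at *; omega

theorem gap_one {α : Type} {p : α → ℤ} (hi : Function.Injective p) (hc : Conv p)
    {x s t : α} (hst : s ≠ t) (h : ∀ u, BtwZ (p s) (p u) (p t) → u = x) :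
    (p t = p s + 1 ∨ p s = p t + 1) ∨ (p s + 1 = p x ∧ p x + 1 = p t) ∨
      (p t + 1 = p x ∧ p x + 1 = p s) := by
  have hne : p s ≠ p t := fun e => hst (hi e)
  rcases lt_or_gt_of_ne hne with hl | hl
  · by_cases h1 : p t = p s + 1
    · omega
    obtain ⟨c, hcc⟩ := hc s t (p s + 1) (by omega) (by omega)
    obtain ⟨e, he⟩ := hc s t (p t - 1) (by omega) (by omega)
    have := h c (by unfold BtwZ; omega)
    have := h e (by unfold BtwZ; omega)
    subst_vars; omega
  · by_cases h1 : p s = p t + 1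
    · omega
    obtain ⟨c, hcc⟩ := hc t s (p t + 1) (by omega) (by omega)
    obtain ⟨e, he⟩ := hc t s (p s - 1) (by omega) (by omega)
    have := h c (by unfold BtwZ; omega)
    have := h e (by unfold BtwZ; omega)
    subst_vars; omega

theorem bond_sep {α : Type} {p w : α → ℤ} (hpi : Function.Injective p) (hpc : Conv p)
    (hwi : Function.Injective w) (hwc : Conv w) (hk : King p w) {x s t : α}
    (h : Bond p w {x} s t) :
    (Sep1 p w x s t ∨ Sep1 w p x s t) ∨ (Sep1 p w x t s ∨ Sep1 w p x t s) := by
  obtain ⟨h1, h2, h3, h4, h5⟩ := h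
  simp only [Finset.mem_singleton] at h4 h5
  have a := gap_one hpi hpc h1 h4
  have b := gap_one hwi hwc h1 h5
  have k1 := hk s t
  have k2 := hk t s
  have k3 := hk s x
  have k4 := hk x s
  rcases a with a | ⟨a, a'⟩ | ⟨a, a'⟩
  · rcases b with b | ⟨b, b'⟩ | ⟨b, b'⟩
    · exfalso; clear k3 k4; omega
    · exact Or.inl (Or.inr ⟨b, b', a⟩)
    · exact Or.inr (Or.inr ⟨b, b', a.symm⟩)
  · rcases b with b | ⟨b, b'⟩ | ⟨b, b'⟩
    · exact Or.inl (Or.inl ⟨a, a', b⟩)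
    · exfalso; clear k1 k2; omega
    · exfalso; clear k1 k2; omega
  · rcases b with b | ⟨b, b'⟩ | ⟨b, b'⟩
    · exact Or.inr (Or.inl ⟨a, a', b.symm⟩)
    · exfalso; clear k1 k2; omega
    · exfalso; clear k1 k2; omega

/-- the local pattern 3142 -/
def Pat {α : Type} (p w : α → ℤ) (d r q₁ q₂ : α) : Prop :=
  p r = p d + 1 ∧ p q₁ = p d + 2 ∧ p q₂ = p d + 3 ∧
  w r = w d - 2 ∧ w q₁ = w d + 1 ∧ w q₂ = w d - 1

theorem find_pat {α : Type} {p w : α → ℤ} (hpi : Function.Injective p)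
    (hwi : Function.Injective w) (hk : King p w) (D : α → Prop)
    (hD : ∀ x, D x → ∃ s t, D s ∧ D t ∧ (Sep1 p w x s t ∨ Sep1 w p x s t))
    (d a b : α) (hd : D d) (hmin : ∀ x, D x → p d ≤ p x)
    (ha : D a) (hb : D b) (wa : w a = w d + 1) (wb : w b = w d - 1) (hab : p b = p a + 1) :
    ∃ r q₁ q₂, Pat p w d r q₁ q₂ := by
  have pj : ∀ {u v : α}, p u = p v → u = v := fun h => hpi h
  have wj : ∀ {u v : α}, w u = w v → u = v := fun h => hwi h
  have hda := hmin a ha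
  have hne : p d ≠ p a := fun e => by have := pj e; subst this; omega
  have hk1 := hk d a
  obtain ⟨s, t, hs, ht, hst⟩ := hD a ha
  obtain ⟨s', t', hs', ht', hst'⟩ := hD b hb
  have ms := hmin s hs
  have mt := hmin t ht
  have ms' := hmin s' hs'
  have mt' := hmin t' ht'
  rcases hst with ⟨e1, e2, e3⟩ | ⟨e1, e2, e3⟩
  · -- vertical: s at j-1, t = b
    have htb : t = b := pj (by omega)
    subst htb
    have hws : w s = w d - 2 := by
      rcases e3 with e3 | e3
      · omega
      · have : s = d := wj (by omega)
        subst this; omega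
    rcases hst' with ⟨f1, f2, f3⟩ | ⟨f1, f2, f3⟩
    · -- vertical : t' at j+2
      have hsa : s' = a := pj (by omega)
      subst hsa
      have hwt : w t' = w d + 2 := by
        rcases f3 with f3 | f3
        · omega
        · have : t' = d := wj (by omega)
          subst this; omega
      obtain ⟨x, y, hx, hy, hxy⟩ := hD s hs
      rcases hxy with ⟨g1, g2, g3⟩ | ⟨g1, g2, g3⟩
      · have : y = s' := pj (by omega)
        subst this
        have hxd : x = d := by
          rcases g3 with g3 | g3
          · exact wj (by omega)
          · have : x = t' := wj (by omega)
            subst this; omega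
        subst hxd
        exact ⟨s, y, t, by unfold Pat; omega⟩
      · have : y = t := wj (by omega)
        subst this
        rcases g3 with g3 | g3
        · have : x = s' := pj (by omega)
          subst this; omega
        · have : x = t' := pj (by omega)
          subst this; omega
    · have : t' = d := wj (by omega)
      subst this
      have : s' = s := wj (by omega)
      subst this
      exact ⟨s', a, t, by unfold Pat; omega⟩
  · have : s = d := wj (by omega)
    subst this
    have hpt : p t = p s + 1 := by omega
    rcases hst' with ⟨f1, f2, f3⟩ | ⟨f1, f2, f3⟩
    · have hsa : s' = a := pj (by omega)
      subst hsa
      rcases f3 with f3 | f3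
      · have : t' = t := wj (by omega)
        subst this; omega
      · have : t' = s := wj (by omega)
        subst this; omega
    · have : t' = s := wj (by omega)
      subst this
      have : s' = t := pj (by omega)
      subst this; omega

/-- With the local pattern present, contracting it works. -/
theorem contract {α : Type} [DecidableEq α] {p w : α → ℤ} (hpi : Function.Injective p)
    (hwi : Function.Injective w) (hpc : Conv p) (hwc : Conv w) (hk : King p w)
    (Av : Finset α → Prop) (hmono : ∀ E F, E ⊆ F → Av F → Av E)
    (hswap : ∀ E s t, Av E → Bond p w E s t → Av (insert s E))
    (hD : ∀ x, Av {x} → ∃ s t, Av {s} ∧ Av {t} ∧ (Sep1 p w x s t ∨ Sep1 w p x s t))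
    (d r a b : α) (hd : Av {d}) (hP : Pat p w d r a b) :
    ∃ E, Av E ∧ (∀ s t, ¬ Bond p w E s t) ∧ (E.card = 1 ∨ E.card = 3) := by
  have pj : ∀ {u v : α}, p u = p v → u = v := fun h => hpi h
  have wj : ∀ {u v : α}, w u = w v → u = v := fun h => hwi h
  obtain ⟨p1, p2, p3, w1, w2, w3⟩ := hP
  have n1 : d ≠ r := by rintro rfl; omega
  have n2 : d ≠ a := by rintro rfl; omega
  have n3 : d ≠ b := by rintro rfl; omega
  have n4 : r ≠ a := by rintro rfl; omega
  have n5 : r ≠ b := by rintro rfl; omega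
  have n6 : a ≠ b := by rintro rfl; omega
  have hE2 : Av {a, d} := by
    apply hswap {d} a b hd
    refine ⟨n6, by simp [n2.symm], by simp [n3.symm], ?_, ?_⟩
    · intro u hu; unfold BtwZ at hu; omega
    · intro u hu; unfold BtwZ at hu
      simp only [Finset.mem_singleton]
      exact wj (by omega)
  have hE3 : Av {r, a, d} := by
    apply hswap {a, d} r b hE2
    refine ⟨n5, by simp [n4, n1.symm], by simp [n6.symm, n3.symm], ?_, ?_⟩
    · intro u hu; unfold BtwZ at hu
      simp only [Finset.mem_insert]
      exact Or.inl (pj (by omega))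
    · intro u hu; unfold BtwZ at hu; omega
  refine ⟨{r, a, d}, hE3, ?_, Or.inr (by rw [Finset.card_eq_three]; exact ⟨r, a, d, n4, n1.symm, n2.symm, rfl⟩)⟩
  -- no bond involving b
  have hE : ∀ u, u ∈ ({r, a, d} : Finset α) ↔ u = r ∨ u = a ∨ u = d := by
    intro u; simp
  have key : ∀ t, ¬ Bond p w {r, a, d} t b := by
    intro t hB
    have hAt : Av {t} := hmono _ _ (by simp) (hswap _ _ _ hE3 hB)
    obtain ⟨h1, h2, h3, h4, h5⟩ := hB
    have m1 : t ≠ r := fun h => h2 (by simp [h])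
    have m2 : t ≠ a := fun h => h2 (by simp [h])
    have m3 : t ≠ d := fun h => h2 (by simp [h])
    have q1 : p t ≠ p r := fun e => m1 (pj e)
    have q2 : p t ≠ p a := fun e => m2 (pj e)
    have q3 : p t ≠ p d := fun e => m3 (pj e)
    have q4 : p t ≠ p b := fun e => h1 (pj e)
    have v1 : w t ≠ w r := fun e => m1 (wj e)
    have v2 : w t ≠ w a := fun e => m2 (wj e)
    have v3 : w t ≠ w d := fun e => m3 (wj e)
    have v4 : w t ≠ w b := fun e => h1 (wj e)
    have hp : p t = p d - 1 ∨ p t = p d + 4 := by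
      by_contra hcon
      rcases lt_or_ge (p t) (p d) with hl | hl
      · obtain ⟨c, hc⟩ := hpc t d (p d - 1) (by omega) (by omega)
        have := h4 c (by unfold BtwZ; omega)
        rw [hE] at this
        rcases this with rfl | rfl | rfl <;> omega
      · obtain ⟨c, hc⟩ := hpc b t (p d + 4) (by omega) (by omega)
        have := h4 c (by unfold BtwZ; omega)
        rw [hE] at this
        rcases this with rfl | rfl | rfl <;> omega
    have hw : w t = w d - 3 ∨ w t = w d + 2 := by
      by_contra hcon
      rcases lt_or_ge (w t) (w d) with hl | hl
      · obtain ⟨c, hc⟩ := hwc t b (w d - 3) (by omega) (by omega)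
        have := h5 c (by unfold BtwZ; omega)
        rw [hE] at this
        rcases this with rfl | rfl | rfl <;> omega
      · obtain ⟨c, hc⟩ := hwc b t (w d + 2) (by omega) (by omega)
        have := h5 c (by unfold BtwZ; omega)
        rw [hE] at this
        rcases this with rfl | rfl | rfl <;> omega
    have loc : ∀ y, w d - 2 ≤ w y → w y ≤ w d + 1 → p d ≤ p y ∧ p y ≤ p d + 3 := by
      intro y hy1 hy2
      have : w y = w r ∨ w y = w b ∨ w y = w d ∨ w y = w a := by omega
      rcases this with h | h | h | h <;> (have := wj h; subst this; omega)
    have loc' : ∀ y, p d ≤ p y → p y ≤ p d + 3 →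
        (y = d ∨ y = r ∨ y = a ∨ y = b) := by
      intro y hy1 hy2
      have : p y = p d ∨ p y = p r ∨ p y = p a ∨ p y = p b := by omega
      rcases this with h | h | h | h <;> (have := pj h; tauto)
    obtain ⟨s, u, -, -, hsu⟩ := hD t hAt
    rcases hsu with ⟨e1, e2, e3⟩ | ⟨e1, e2, e3⟩
    · rcases hp with hp | hp
      · have : u = d := pj (by omega)
        subst this
        have := loc s (by omega) (by omega)
        omega
      · have : s = b := pj (by omega)
        subst this
        have := loc u (by omega) (by omega)
        omega
    · rcases hw with hw | hw
      · have : u = r := wj (by omega)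
        subst this
        rcases loc' s (by omega) (by omega) with h | h | h | h <;> subst h <;> omega
      · have : s = a := wj (by omega)
        subst this
        rcases loc' u (by omega) (by omega) with h | h | h | h <;> subst h <;> omega
  intro s t hB
  by_cases hs : s = b
  · subst hs; exact key t hB.symm
  by_cases ht : t = b
  · subst ht; exact key s hB
  obtain ⟨h1, h2, h3, h4, h5⟩ := hB
  rw [hE] at h2 h3
  push Not at h2 h3
  have nb := h4 b
  have nb' := h5 b
  rw [hE] at nb nb'
  have nb1 : ¬ BtwZ (p s) (p b) (p t) := fun h => by
    rcases nb h with h | h | h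
    · exact n5 h.symm
    · exact n6 h.symm
    · exact n3 h.symm
  have nb2 : ¬ BtwZ (w s) (w b) (w t) := fun h => by
    rcases nb' h with h | h | h
    · exact n5 h.symm
    · exact n6 h.symm
    · exact n3 h.symm
  have out : ∀ y, y ≠ r ∧ y ≠ a ∧ y ≠ d → y ≠ b →
      (p y < p d ∨ p d + 3 < p y) ∧ (w y < w d - 2 ∨ w d + 1 < w y) := by
    intro y ⟨y1, y2, y3⟩ y4
    have q1 : p y ≠ p r := fun e => y1 (pj e)
    have q2 : p y ≠ p a := fun e => y2 (pj e)
    have q3 : p y ≠ p d := fun e => y3 (pj e)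
    have q4 : p y ≠ p b := fun e => y4 (pj e)
    have v1 : w y ≠ w r := fun e => y1 (wj e)
    have v2 : w y ≠ w a := fun e => y2 (wj e)
    have v3 : w y ≠ w d := fun e => y3 (wj e)
    have v4 : w y ≠ w b := fun e => y4 (wj e)
    omega
  have os := out s h2 hs
  have ot := out t h3 ht
  have c1 : ∀ u, ¬ BtwZ (p s) (p u) (p t) := by
    intro u hu
    have := h4 u hu
    rw [hE] at this
    unfold BtwZ at *
    rcases this with rfl | rfl | rfl <;> omega
  have c2 : ∀ u, ¬ BtwZ (w s) (w u) (w t) := by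
    intro u hu
    have := h5 u hu
    rw [hE] at this
    unfold BtwZ at *
    rcases this with rfl | rfl | rfl <;> omega
  have g1 := gap_one (x := s) hpi hpc h1 (fun u hu => (c1 u hu).elim)
  have g2 := gap_one (x := s) hwi hwc h1 (fun u hu => (c2 u hu).elim)
  have k1 := hk s t
  have k2 := hk t s
  omega

theorem core {α : Type} [DecidableEq α] [Fintype α] {p w : α → ℤ} (hpi : Function.Injective p)
    (hwi : Function.Injective w) (hpc : Conv p) (hwc : Conv w) (hk : King p w)
    (Av : Finset α → Prop) (hmono : ∀ E F, E ⊆ F → Av F → Av E)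
    (hswap : ∀ E s t, Av E → Bond p w E s t → Av (insert s E))
    (hne : ∃ x, Av {x}) :
    ∃ E, Av E ∧ (∀ s t, ¬ Bond p w E s t) ∧ (E.card = 1 ∨ E.card = 3) := by
  by_contra hcon
  have hD : ∀ x, Av {x} → ∃ s t, Av {s} ∧ Av {t} ∧ (Sep1 p w x s t ∨ Sep1 w p x s t) := by
    intro x hx
    by_cases h : ∀ s t, ¬ Bond p w {x} s t
    · exact (hcon ⟨{x}, hx, h, Or.inl (by simp)⟩).elim
    push Not at h
    obtain ⟨s, t, hB⟩ := h
    have hs : Av {s} := hmono _ _ (by simp) (hswap _ _ _ hx hB)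
    have ht : Av {t} := hmono _ _ (by simp) (hswap _ _ _ hx hB.symm)
    rcases bond_sep hpi hpc hwi hwc hk hB with h | h
    · exact ⟨s, t, hs, ht, h⟩
    · exact ⟨t, s, ht, hs, h⟩
  classical
  obtain ⟨d, hd, hmin⟩ := Finset.exists_min_image (Finset.univ.filter fun x => Av {x}) p
    (by obtain ⟨x, hx⟩ := hne; exact ⟨x, by simp [hx]⟩)
  simp only [Finset.mem_filter, Finset.mem_univ, true_and] at hd hmin
  obtain ⟨s, t, hs, ht, hst⟩ := hD d hd
  rcases hst with ⟨e1, e2, e3⟩ | ⟨e1, e2, e3⟩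
  · have := hmin s hs; omega
  rcases e3 with e3 | e3
  · -- t right after s; w s = w d - 1 : flip values
    have bflip : ∀ E s t, Bond p (fun x => - w x) E s t ↔ Bond p w E s t := by
      intro E s t
      have : ∀ a b c : ℤ, BtwZ (-a) (-b) (-c) ↔ BtwZ a b c := by
        intro a b c; unfold BtwZ; omega
      simp only [Bond, this]
    have hwi' : Function.Injective (fun x => - w x) := fun x y h => hwi (by simpa using h)
    have hwc' : Conv (fun x => - w x) := by
      intro a b k h1 h2
      obtain ⟨c, hc⟩ := hwc b a (-k) (by simp only at h2; omega) (by simp only at h1; omega)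
      exact ⟨c, by simp only; omega⟩
    have hk' : King p (fun x => - w x) := by
      intro a b h
      have := hk a b h
      simp only
      omega
    have hD' : ∀ x, Av {x} → ∃ s t, Av {s} ∧ Av {t} ∧
        (Sep1 p (fun x => - w x) x s t ∨ Sep1 (fun x => - w x) p x s t) := by
      intro x hx
      obtain ⟨s, t, hs, ht, h⟩ := hD x hx
      rcases h with h | h
      · exact ⟨s, t, hs, ht, Or.inl (by unfold Sep1 at *; simp only; omega)⟩
      · exact ⟨t, s, ht, hs, Or.inr (by unfold Sep1 at *; simp only; omega)⟩
    obtain ⟨r, a, b, hP⟩ := find_pat hpi hwi' hk' (fun x => Av {x}) hD' d s t hd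
      (fun x hx => hmin x hx) hs ht (by omega) (by omega) (by omega)
    obtain ⟨E, h1, h2, h3⟩ := contract hpi hwi' hpc hwc' hk' Av hmono
      (fun E s t h hB => hswap E s t h ((bflip _ _ _).1 hB)) hD' d r a b hd hP
    exact hcon ⟨E, h1, fun s t hB => h2 s t ((bflip _ _ _).2 hB), h3⟩
  · obtain ⟨r, a, b, hP⟩ := find_pat hpi hwi hk (fun x => Av {x}) hD d t s hd
      (fun x hx => hmin x hx) ht hs (by omega) (by omega) (by omega)
    exact hcon (contract hpi hwi hpc hwc hk Av hmono hswap hD d r a b hd hP)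

def posZ {n : ℕ} (i : Fin n) : ℤ := (i : ℕ)
def valZ {n : ℕ} (σ : Equiv.Perm (Fin n)) (i : Fin n) : ℤ := (σ i : ℕ)

theorem posZ_inj {n : ℕ} : Function.Injective (posZ (n := n)) := by
  intro a b h; simp only [posZ] at h; exact Fin.ext (by exact_mod_cast h)

theorem valZ_inj {n : ℕ} (σ : Equiv.Perm (Fin n)) : Function.Injective (valZ σ) :=
  fun a b h => σ.injective (posZ_inj h)

theorem posZ_conv {n : ℕ} : Conv (posZ (n := n)) := by
  intro a b k h1 h2
  simp only [posZ] at *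
  have := b.2
  exact ⟨⟨k.toNat, by omega⟩, by simp only; omega⟩

theorem valZ_conv {n : ℕ} (σ : Equiv.Perm (Fin n)) : Conv (valZ σ) := by
  intro a b k h1 h2
  obtain ⟨c, hc⟩ := posZ_conv (σ a) (σ b) k h1 h2
  exact ⟨σ.symm c, by simp only [valZ, Equiv.apply_symm_apply]; exact hc⟩

theorem king_iff {n : ℕ} (σ : Equiv.Perm (Fin n)) : IsKing σ ↔ King posZ (valZ σ) := by
  constructor
  · intro h a b hab
    have := h a b (by simp only [posZ] at hab; omega)
    simp only [fdist, valZ] at *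
    omega
  · intro h a b hab
    have := h a b (by simp only [posZ]; omega)
    simp only [fdist, valZ] at *
    omega

def AvE {m n : ℕ} (π : Equiv.Perm (Fin m)) (σ : Equiv.Perm (Fin n)) (E : Finset (Fin n)) : Prop :=
  ∃ f : Fin m ↪o Fin n, (∀ a b : Fin m, π a < π b ↔ σ (f a) < σ (f b)) ∧ ∀ a, f a ∉ E

theorem av_swap {m n : ℕ} (π : Equiv.Perm (Fin m)) (σ : Equiv.Perm (Fin n)) (hπ : IsKing π)
    (E : Finset (Fin n)) (s t : Fin n) (hA : AvE π σ E) (hB : Bond posZ (valZ σ) E s t) :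
    AvE π σ (insert s E) := by
  obtain ⟨f, hf, hE⟩ := hA
  obtain ⟨h1, h2, h3, h4, h5⟩ := hB
  by_cases hs : ∃ a, f a = s
  swap
  · push Not at hs
    exact ⟨f, hf, fun a => by simp [hs a, hE a]⟩
  obtain ⟨a0, ha0⟩ := hs
  have c1 : ∀ a, ¬ BtwZ (posZ s) (posZ (f a)) (posZ t) := fun a h => hE a (h4 _ h)
  have c2 : ∀ a, ¬ BtwZ (valZ σ s) (valZ σ (f a)) (valZ σ t) := fun a h => hE a (h5 _ h)
  have hfl : ∀ a b, posZ a < posZ b ↔ posZ (f a) < posZ (f b) := by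
    intro a b
    have := f.lt_iff_lt (a := a) (b := b)
    simp only [posZ, Fin.lt_def] at *
    omega
  have hfv : ∀ a b, valZ π a < valZ π b ↔ valZ σ (f a) < valZ σ (f b) := by
    intro a b
    have := hf a b
    simp only [valZ, Fin.lt_def] at *
    omega
  by_cases ht : ∃ b, f b = t
  · exfalso
    obtain ⟨b0, hb0⟩ := ht
    subst ha0 hb0
    have hne : a0 ≠ b0 := fun h => h1 (by rw [h])
    have g1 := gap_one (x := a0) posZ_inj posZ_conv hne (fun u hu => (c1 u (by
      unfold BtwZ at *; simpa only [hfl] using hu)).elim)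
    have g2 := gap_one (x := a0) (valZ_inj π) (valZ_conv π) hne (fun u hu => (c2 u (by
      unfold BtwZ at *; simpa only [hfv] using hu)).elim)
    have k1 := (king_iff π).1 hπ a0 b0
    have k2 := (king_iff π).1 hπ b0 a0
    omega
  · push Not at ht
    have d1 : ∀ a, posZ (f a) ≠ posZ t := fun a h => ht a (posZ_inj h)
    have d2 : ∀ a, valZ σ (f a) ≠ valZ σ t := fun a h => ht a (valZ_inj σ h)
    have s1 : ∀ a, a ≠ a0 → ((posZ (f a) < posZ s ↔ posZ (f a) < posZ t) ∧
        (posZ s < posZ (f a) ↔ posZ t < posZ (f a))) := by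
      intro a ha
      have e1 : posZ (f a) ≠ posZ s := fun h => ha (f.injective ((posZ_inj h).trans ha0.symm))
      have := c1 a
      have := d1 a
      unfold BtwZ at *
      omega
    have s2 : ∀ a, a ≠ a0 → ((valZ σ (f a) < valZ σ s ↔ valZ σ (f a) < valZ σ t) ∧
        (valZ σ s < valZ σ (f a) ↔ valZ σ t < valZ σ (f a))) := by
      intro a ha
      have e1 : valZ σ (f a) ≠ valZ σ s :=
        fun h => ha (f.injective ((valZ_inj σ h).trans ha0.symm))
      have := c2 a
      have := d2 a
      unfold BtwZ at *
      omega
    have lp : ∀ {k : ℕ} (a b : Fin k), a < b ↔ posZ a < posZ b := by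
      intro k a b; simp only [posZ, Fin.lt_def]; omega
    have lv : ∀ {k : ℕ} (ρ : Equiv.Perm (Fin k)) (a b : Fin k), ρ a < ρ b ↔ valZ ρ a < valZ ρ b := by
      intro k ρ a b; simp only [valZ, Fin.lt_def]; omega
    let g : Fin m → Fin n := Function.update f a0 t
    have g0 : g a0 = t := by simp [g]
    have g1 : ∀ a, a ≠ a0 → g a = f a := fun a ha => by simp [g, ha]
    have gm : StrictMono g := by
      intro a b hab
      rw [lp]
      rw [lp, hfl] at hab
      by_cases ha : a = a0
      · subst ha
        by_cases hb : b = a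
        · subst hb; omega
        · rw [g0, g1 b hb]; rw [ha0] at hab; exact (s1 b hb).2.1 hab
      · by_cases hb : b = a0
        · subst hb; rw [g0, g1 a ha]; rw [ha0] at hab; exact (s1 a ha).1.1 hab
        · rw [g1 a ha, g1 b hb]; exact hab
    refine ⟨OrderEmbedding.ofStrictMono g gm, ?_, ?_⟩
    · intro a b
      rw [OrderEmbedding.coe_ofStrictMono, lv, lv, hfv]
      by_cases ha : a = a0
      · subst ha
        by_cases hb : b = a
        · subst hb; simp
        · rw [g0, g1 b hb, ha0]; exact (s2 b hb).2
      · by_cases hb : b = a0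
        · subst hb; rw [g0, g1 a ha, ha0]; exact (s2 a ha).1
        · rw [g1 a ha, g1 b hb]
    · intro a
      rw [OrderEmbedding.coe_ofStrictMono]
      by_cases ha : a = a0
      · subst ha; rw [g0]; simp [h1.symm, h3]
      · rw [g1 a ha]
        simp only [Finset.mem_insert, not_or]
        exact ⟨fun h => ha (f.injective (h.trans ha0.symm)), hE a⟩

theorem std {m n : ℕ} (π : Equiv.Perm (Fin m)) (σ : Equiv.Perm (Fin n))
    (E : Finset (Fin n)) (hA : AvE π σ E) (hB : ∀ s t, ¬ Bond posZ (valZ σ) E s t) (l : ℕ)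
    (hl : l + E.card = n) :
    ∃ τ : Equiv.Perm (Fin l), IsKing τ ∧ Contains π τ ∧ Contains τ σ := by
  have hcard : (Eᶜ).card = l := by rw [Finset.card_compl, Fintype.card_fin]; omega
  have hcard' : (Eᶜ.map σ.toEmbedding).card = l := by rw [Finset.card_map, hcard]
  let g := (Eᶜ).orderIsoOfFin hcard
  let h := (Eᶜ.map σ.toEmbedding).orderIsoOfFin hcard'
  let e : {x // x ∈ Eᶜ} ≃ {x // x ∈ Eᶜ.map σ.toEmbedding} :=
    σ.subtypeEquiv (fun a => by simp)
  let τ : Equiv.Perm (Fin l) := g.toEquiv.trans (e.trans h.symm.toEquiv)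
  have hτ : ∀ a b, τ a < τ b ↔ σ (g a) < σ (g b) := by
    intro a b
    change h.symm (e (g a)) < h.symm (e (g b)) ↔ _
    rw [h.symm.lt_iff_lt]
    rfl
  have hsurj : ∀ u, u ∉ E → ∃ c, (g c : Fin n) = u := by
    intro u hu
    exact ⟨g.symm ⟨u, by simpa using hu⟩, by simp⟩
  have hgE : ∀ a, (g a : Fin n) ∉ E := fun a => Finset.mem_compl.1 (g a).2
  have hgl : ∀ a b, a < b ↔ (g a : Fin n) < g b := by
    intro a b; rw [← g.lt_iff_lt]; rfl
  refine ⟨τ, ?_, ?_, ?_⟩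
  · intro i j hij hd
    apply hB (g i) (g j)
    refine ⟨?_, hgE i, hgE j, ?_, ?_⟩
    · intro h
      have := g.injective (Subtype.ext h)
      subst this; omega
    · intro u hu
      by_contra hu'
      obtain ⟨c, rfl⟩ := hsurj u hu'
      have a1 := hgl i c
      have a2 := hgl c j
      have a3 := hgl j c
      have a4 := hgl c i
      simp only [BtwZ, posZ, Fin.lt_def] at *
      omega
    · intro u hu
      by_contra hu'
      obtain ⟨c, rfl⟩ := hsurj u hu'
      have a1 := hτ i c
      have a2 := hτ c j
      have a3 := hτ j c
      have a4 := hτ c i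
      simp only [BtwZ, valZ, fdist, Fin.lt_def] at *
      omega
  · obtain ⟨f, hf, hE⟩ := hA
    let k : Fin m → Fin l := fun a => g.symm ⟨f a, by simpa using hE a⟩
    have hk : ∀ a, (g (k a) : Fin n) = f a := fun a => by simp [k]
    have km : StrictMono k := by
      intro a b hab
      rw [hgl, hk, hk]; exact f.lt_iff_lt.2 hab
    refine ⟨OrderEmbedding.ofStrictMono k km, ?_⟩
    intro a b
    rw [OrderEmbedding.coe_ofStrictMono, hτ, hk, hk, hf]
  · exact ⟨OrderEmbedding.ofStrictMono (fun a => (g a : Fin n)) (fun a b h => (hgl a b).1 h), hτ⟩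

/-- if `π ≺ σ` are kings with length gap `> 3`, there is a king `τ`
with `π ≺ τ ≺ σ` whose length is smaller than that of `σ` by `1` or `3`. -/
theorem step_one_or_three (m n : ℕ) (π : Equiv.Perm (Fin m)) (σ : Equiv.Perm (Fin n))
    (hπ : IsKing π) (hσ : IsKing σ) (hπσ : StrictContains π σ) (hgap : m + 3 < n) :
    ∃ (l : ℕ) (τ : Equiv.Perm (Fin l)),
      IsKing τ ∧ StrictContains π τ ∧ StrictContains τ σ ∧ (n = l + 1 ∨ n = l + 3) := by
  obtain ⟨⟨f, hf⟩, hmn⟩ := hπσ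
  have hne : ∃ x, AvE π σ {x} := by
    have : ¬ Function.Surjective f := by
      intro hs
      have := Fintype.card_le_of_surjective f hs
      simp only [Fintype.card_fin] at this
      omega
    unfold Function.Surjective at this
    push Not at this
    obtain ⟨x, hx⟩ := this
    exact ⟨x, f, hf, fun a => by simpa using hx a⟩
  obtain ⟨E, hA, hB, hc⟩ := core posZ_inj (valZ_inj σ) posZ_conv (valZ_conv σ)
    ((king_iff σ).1 hσ) (AvE π σ)
    (fun E F hEF ⟨f, hf, h⟩ => ⟨f, hf, fun a ha => h a (hEF ha)⟩)
    (fun E s t => av_swap π σ hπ E s t) hne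
  obtain ⟨τ, h1, h2, h3⟩ := std π σ E hA hB (n - E.card) (by omega)
  exact ⟨n - E.card, τ, h1, ⟨h2, by omega⟩, ⟨h3, by omega⟩, by omega⟩
end

section
/- Let σ ∈ K_n and suppose there is an index i such that the permutation π = ∇_i(σ) of length n−1 has exactly one 2-block, say at positions j, j+1, and this 2-block is strict, i.e., it is not contained in a 3-block (there is no set of three consecutive positions of π containing j and j+1 whose values are three consecutive integers). Then σ has a prince, i.e., there exists τ ∈ K_{n−1} with τ ≺ σ. -/
open Equiv

lemma comb_aux (N : ℕ) (s : ℕ → ℤ) (inj : ∀ a < N, ∀ b < N, s a = s b → a = b)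
    (king : ∀ a, a + 1 < N → s (a+1) - s a ≠ 1 ∧ s (a+1) - s a ≠ -1)
    (q : ℕ) (hq : q + 2 < N) (e : ℤ) (he : e = 1 ∨ e = -1) (hs : s (q+2) = s q + e)
    (h1 : q + 3 < N → s (q+3) ≠ s q - e)
    (h2 : ∀ a, a + 1 = q → s a ≠ s (q+2) + e) :
    ∃ r < N, (∀ a, a + 1 = r → a + 2 < N → s (a+2) - s a ≠ 1 ∧ s (a+2) - s a ≠ -1) ∧
      (∀ a < N, ∀ b < N, (b = a + 1 ∨ a = b + 1) → s a + 1 = s r → s r + 1 = s b → False) := by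
  classical
  let R : ℕ → Prop := fun r => q + 2 ≤ r ∧ r < N ∧
    ∀ t, q ≤ t → t + 2 ≤ r → (s (t+2) - s t = 1 ∨ s (t+2) - s t = -1)
  have hR0 : R (q+2) := by
    refine ⟨le_rfl, hq, ?_⟩
    intro t h h'
    obtain rfl : t = q := by omega
    omega
  obtain ⟨r, ⟨hr1, hr2, hr3⟩, hmax⟩ : ∃ r, R r ∧ ¬ R (r+1) := by
    by_contra hcon
    push Not at hcon
    have : ∀ k, R (q + 2 + k) := by
      intro k
      induction k with
      | zero => exact hR0
      | succ k ih => exact hcon _ ih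
    have := (this N).2.1
    omega
  have hmax' : r + 1 < N → s (r+1) - s (r-1) ≠ 1 ∧ s (r+1) - s (r-1) ≠ -1 := by
    intro hN
    by_contra hc
    apply hmax
    refine ⟨by omega, hN, ?_⟩
    intro t ht ht'
    by_cases h : t + 2 ≤ r
    · exact hr3 t ht h
    · have h3 : t = r - 1 := by omega
      have h4 : t + 2 = r + 1 := by omega
      rw [h4, h3]; omega
  have hpos : ∀ a, a + 1 = r → a + 2 < N → s (a+2) - s a ≠ 1 ∧ s (a+2) - s a ≠ -1 := by
    intro a ha hN
    have := hmax' (by omega)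
    subst ha
    simpa using this
  by_cases hcol : s (r-3) + s (r-2) = 2 * s r ∧ (s (r-3) - s r = 1 ∨ s (r-3) - s r = -1) ∧ q + 4 ≤ r
  · obtain ⟨c1, c2, c3⟩ := hcol
    obtain ⟨u, rfl⟩ : ∃ u, r = u + 4 := ⟨r - 4, by omega⟩
    have e1 : u + 4 - 3 = u + 1 := by omega
    have e2 : u + 4 - 2 = u + 2 := by omega
    rw [e1] at c1 c2; rw [e2] at c1
    have a0 := hr3 u (by omega) (by omega)
    have a1 := hr3 (u+1) (by omega) (by omega)
    have a2 := hr3 (u+2) (by omega) (by omega)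
    have i0 := inj u (by omega) (u+4) (by omega)
    have i1 := inj (u+1) (by omega) (u+3) (by omega)
    have i2 := inj (u+3) (by omega) (u+4) (by omega)
    simp only [Nat.add_assoc, Nat.reduceAdd] at a0 a1 a2
    obtain ⟨d, hd, d0, d1, d2, d3⟩ : ∃ d : ℤ, (d = 1 ∨ d = -1) ∧ s u = s (u+4) - 2 * d ∧
        s (u+1) = s (u+4) + d ∧ s (u+2) = s (u+4) - d ∧ s (u+3) = s (u+4) + 2 * d := by
      have i0' : s u ≠ s (u+4) := fun h => by have := i0 h; omega
      have i2' : s (u+3) ≠ s (u+4) := fun h => by have := i2 h; omega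
      clear i0 i1 i2 inj king h1 h2 hr3 hmax hmax' hpos hs he hR0
      refine ⟨s (u+1) - s (u+4), c2, ?_, by ring, by omega, ?_⟩
      · rcases c2 with c2 | c2 <;> rcases a2 with a2 | a2 <;> omega
      · rcases c2 with c2 | c2 <;> rcases a1 with a1 | a1 <;> omega
    have huq : u = q := by
      by_contra hne
      obtain ⟨w, rfl⟩ : ∃ w, u = w + 1 := ⟨u - 1, by omega⟩
      have b := hr3 w (by omega) (by omega)
      have j0 : s w ≠ s (w+1+4) := fun h => by have := inj w (by omega) (w+1+4) (by omega) h; omega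
      have j1 : s w ≠ s (w+1+3) := fun h => by have := inj w (by omega) (w+1+3) (by omega) h; omega
      clear a0 a1 a2 c1 c2 i0 i1 i2 inj king h1 h2 hr3 hmax hmax' hpos hs he hR0
      simp only [Nat.add_assoc, Nat.reduceAdd] at *
      omega
    subst huq
    clear a0 a1 a2 c1 c2 i0 i1 i2 h1 h2 hr3 hmax hmax' hpos hs he hR0
    refine ⟨u, by omega, ?_, ?_⟩
    · intro a ha haN
      subst ha
      have j0 : s a ≠ s (a+1+4) := fun h => by have := inj a (by omega) (a+1+4) (by omega) h; omega
      have j1 : s a ≠ s (a+1+3) := fun h => by have := inj a (by omega) (a+1+3) (by omega) h; omega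
      clear inj king
      simp only [Nat.add_assoc, Nat.reduceAdd] at *
      omega
    · intro a ha b hb hab hsa hsb
      have ja := inj a ha (u+2) (by omega)
      have jb := inj b hb (u+2) (by omega)
      have : a = u+2 ∨ b = u+2 := by omega
      rcases this with rfl | rfl
      · have : b = u+1 ∨ b = u+3 := by omega
        rcases this with rfl | rfl <;> omega
      · have : a = u+1 ∨ a = u+3 := by omega
        rcases this with rfl | rfl <;> omega
  · refine ⟨r, hr2, hpos, ?_⟩
    -- general collision
    have key : ∀ c < N, (c + 1 = r - 2 ∨ c = r - 2 + 1) → s c + s (r-2) = 2 * s r → False := by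
      intro c hc hc' hsum
      obtain ⟨u, rfl⟩ : ∃ u, r = u + 2 := ⟨r - 2, by omega⟩
      simp only [Nat.add_sub_cancel] at *
      have a0 := hr3 u (by omega) (by omega)
      rcases hc' with hc' | rfl
      · subst hc'
        have e1 : c + 1 + 2 - 3 = c := by omega
        rw [e1] at hcol
        have hlt : c + 1 + 2 < q + 4 := by
          by_contra hge
          apply hcol
          omega
        rcases (by omega : c + 1 = q ∨ c = q) with h | rfl
        · subst h
          have := h2 c rfl
          omega
        · have i1 := inj (c+2) (by omega) (c+3) (by omega)
          have := h1 (by omega)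
          simp only [Nat.add_assoc, Nat.reduceAdd] at *
          omega
      · have k1 := king (u+1) (by omega)
        simp only [Nat.add_assoc, Nat.reduceAdd] at *
        omega
    intro a ha b hb hab hsa hsb
    have a0 := hr3 (r-2) (by omega) (by omega)
    have e2 : r - 2 + 2 = r := by omega
    rw [e2] at a0
    have ja := inj a ha (r-2) (by omega)
    have jb := inj b hb (r-2) (by omega)
    have : a = r-2 ∨ b = r-2 := by omega
    rcases this with h | h
    · rw [h] at hsa
      exact key b hb (by omega) (by omega)
    · rw [h] at hsb
      exact key a ha (by omega) (by omega)

lemma nabla_spec {n : ℕ} (σ : Equiv.Perm (Fin (n + 1))) (i : Fin (n + 1)) (k : Fin n) :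
    (σ i).succAbove (nabla σ i k) = σ (i.succAbove k) := by
  have h := Equiv.some_removeNone_iff
    (e := (finSuccEquiv' i).symm.trans (σ.trans (finSuccEquiv' (σ i)))) (x := k)
  have hx : some (nabla σ i k) = finSuccEquiv' (σ i) (σ (i.succAbove k)) := by
    unfold nabla
    rw [Equiv.removeNone_some]
    · simp
    · obtain ⟨y, hy⟩ := Fin.exists_succAbove_eq (x := σ (i.succAbove k)) (y := σ i)
        (by simp [Fin.succAbove_ne])
      exact ⟨y, by simp [← hy]⟩
  rw [← finSuccEquiv'_symm_some, hx]; simp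

lemma sA_val {n : ℕ} (p : Fin (n+1)) (k : Fin n) :
    ((p.succAbove k : Fin (n+1)) : ℕ) = if (k:ℕ) < p then (k:ℕ) else k + 1 := by
  unfold Fin.succAbove
  simp only [Fin.lt_def, Fin.val_castSucc]
  split_ifs <;> simp

def pext {n : ℕ} (σ : Equiv.Perm (Fin n)) (a : ℕ) : ℕ := if h : a < n then σ ⟨a, h⟩ else 0

lemma pext_val {n : ℕ} (σ : Equiv.Perm (Fin n)) (a : Fin n) : pext σ a = σ a := by
  simp [pext]

lemma pext_lt {n : ℕ} (σ : Equiv.Perm (Fin n)) (a : ℕ) (h : a < n) : pext σ a < n := by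
  simp [pext, h]

lemma pext_inv {n : ℕ} (σ : Equiv.Perm (Fin n)) (a : ℕ) (h : a < n) : pext σ⁻¹ (pext σ a) = a := by
  simp [pext, h]

lemma pext_nabla {n : ℕ} (σ : Equiv.Perm (Fin (n + 1))) (i : Fin (n + 1)) (k : ℕ) (hk : k < n) :
    pext σ (if k < i then k else k + 1) =
      if pext (nabla σ i) k < pext σ i then pext (nabla σ i) k else pext (nabla σ i) k + 1 := by
  have h := congrArg Fin.val (nabla_spec σ i ⟨k, hk⟩)
  rw [sA_val, ← pext_val, ← pext_val, ← pext_val, sA_val] at h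
  exact h.symm

lemma isKing_iff {n : ℕ} (σ : Equiv.Perm (Fin n)) : IsKing σ ↔
    ∀ a, a + 1 < n → ((pext σ (a+1) : ℤ) - pext σ a ≠ 1 ∧ (pext σ (a+1) : ℤ) - pext σ a ≠ -1) := by
  constructor
  · intro h a ha
    have := h ⟨a, by omega⟩ ⟨a+1, ha⟩ rfl
    unfold fdist at this
    rw [← pext_val σ ⟨a, _⟩, ← pext_val σ ⟨a+1, _⟩] at this
    simp only at this
    omega
  · intro h i j hij
    have := h i (by omega)
    unfold fdist
    rw [← pext_val σ i, ← pext_val σ j, hij]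
    omega

lemma nabla_contains {n : ℕ} (σ : Equiv.Perm (Fin (n + 1))) (i : Fin (n + 1)) :
    StrictContains (nabla σ i) σ := by
  refine ⟨⟨Fin.succAboveOrderEmb i, ?_⟩, by omega⟩
  intro a b
  simp [← nabla_spec]

lemma king_inv {n : ℕ} (σ : Equiv.Perm (Fin n)) (h : IsKing σ) : IsKing σ⁻¹ := by
  intro i j hij hd
  unfold fdist at hd
  rcases (by omega : ((σ⁻¹ j : Fin n) : ℕ) = (σ⁻¹ i : Fin n) + 1 ∨
    ((σ⁻¹ i : Fin n) : ℕ) = (σ⁻¹ j : Fin n) + 1) with h' | h'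
  · apply h _ _ h'
    simp [fdist]; omega
  · apply h _ _ h'
    simp [fdist]; omega

lemma contains_inv {m n : ℕ} (τ : Equiv.Perm (Fin m)) (σ : Equiv.Perm (Fin n))
    (h : Contains τ σ) : Contains τ⁻¹ σ⁻¹ := by
  obtain ⟨f, hf⟩ := h
  refine ⟨OrderEmbedding.ofStrictMono (fun a => σ (f (τ⁻¹ a))) ?_, ?_⟩
  · intro a b hab
    apply (hf _ _).1
    simpa using hab
  · intro a b
    simp

lemma prince_of {n : ℕ} (σ : Equiv.Perm (Fin (n + 1))) (hσ : IsKing σ) (r : ℕ) (hr : r < n + 1)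
    (h1 : ∀ a, a + 1 = r → a + 2 < n + 1 → (pext σ (a+2) : ℤ) - pext σ a ≠ 1 ∧
      (pext σ (a+2) : ℤ) - pext σ a ≠ -1)
    (h2 : ∀ a < n + 1, ∀ b < n + 1, (b = a + 1 ∨ a = b + 1) →
      (pext σ a : ℤ) + 1 = pext σ r → (pext σ r : ℤ) + 1 = pext σ b → False) :
    IsKing (nabla σ ⟨r, hr⟩) := by
  rw [isKing_iff] at *
  intro a ha
  have e1 := pext_nabla σ ⟨r, hr⟩ a (by omega)
  have e2 := pext_nabla σ ⟨r, hr⟩ (a+1) (by omega)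
  simp only at e1 e2
  set P := pext (nabla σ ⟨r, hr⟩)
  have k0 := hσ a (by omega)
  have k1 := hσ (a+1) (by omega)
  have g1 := h1 a
  have hlt : a + 2 < n + 1 := by omega
  have g2 : ¬ ((pext σ a : ℤ) + 1 = pext σ r ∧ (pext σ r : ℤ) + 1 = pext σ (a+1)) :=
    fun h => h2 a (by omega) (a+1) (by omega) (by omega) h.1 h.2
  have g3 : ¬ ((pext σ (a+1) : ℤ) + 1 = pext σ r ∧ (pext σ r : ℤ) + 1 = pext σ a) :=
    fun h => h2 (a+1) (by omega) a (by omega) (by omega) h.1 h.2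
  have g4 : ¬ ((pext σ (a+1) : ℤ) + 1 = pext σ r ∧ (pext σ r : ℤ) + 1 = pext σ (a+2)) :=
    fun h => h2 (a+1) (by omega) (a+2) (by omega) (by omega) h.1 h.2
  have g5 : ¬ ((pext σ (a+2) : ℤ) + 1 = pext σ r ∧ (pext σ r : ℤ) + 1 = pext σ (a+1)) :=
    fun h => h2 (a+2) (by omega) (a+1) (by omega) (by omega) h.1 h.2
  clear h2 h1 hσ
  simp only [Nat.add_assoc, Nat.reduceAdd] at *
  rcases lt_trichotomy r (a+1) with h | h | h
  · rw [if_neg (by omega)] at e1 e2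
    split_ifs at e1 e2 <;> omega
  · subst h
    rw [if_pos (by omega)] at e1
    rw [if_neg (by omega)] at e2
    split_ifs at e1 e2 <;> omega
  · rw [if_pos (by omega)] at e1 e2
    split_ifs at e1 e2 <;> omega

lemma core_s11 {n : ℕ} (σ : Equiv.Perm (Fin (n + 1))) (hσ : IsKing σ)
    (q : ℕ) (hq : q + 2 < n + 1) (e : ℤ) (he : e = 1 ∨ e = -1)
    (hs : (pext σ (q+2) : ℤ) = pext σ q + e)
    (h1 : q + 3 < n + 1 → (pext σ (q+3) : ℤ) ≠ pext σ q - e)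
    (h2 : ∀ a, a + 1 = q → (pext σ a : ℤ) ≠ pext σ (q+2) + e) :
    ∃ τ : Equiv.Perm (Fin n), IsKing τ ∧ StrictContains τ σ := by
  obtain ⟨r, hr, p1, p2⟩ := comb_aux (n+1) (fun a => (pext σ a : ℤ)) (by
    intro a ha b hb hab
    have : pext σ a = pext σ b := by exact_mod_cast hab
    rw [← pext_inv σ a ha, this, pext_inv σ b hb]) ((isKing_iff σ).1 hσ) q hq e he hs h1 h2
  exact ⟨nabla σ ⟨r, hr⟩, prince_of σ hσ r hr p1 p2, nabla_contains _ _⟩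

lemma no_three {n : ℕ} (π : Equiv.Perm (Fin n)) (p : ℕ) (h : ¬ HasThreeBlockAt π p)
    (hp : p + 2 < n) (m : ℕ)
    (x : (pext π p = m ∧ pext π (p+1) = m + 2 ∧ pext π (p+2) = m + 1) ∨
      (pext π p = m + 1 ∧ pext π (p+1) = m ∧ pext π (p+2) = m + 2) ∨
      (pext π p = m + 1 ∧ pext π (p+1) = m + 2 ∧ pext π (p+2) = m) ∨
      (pext π p = m + 2 ∧ pext π (p+1) = m ∧ pext π (p+2) = m + 1)) : False := by
  apply h
  refine ⟨hp, m, ?_⟩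
  rw [← pext_val, ← pext_val, ← pext_val]
  simp only
  rcases x with ⟨a, b, c⟩ | ⟨a, b, c⟩ | ⟨a, b, c⟩ | ⟨a, b, c⟩ <;> rw [a, b, c] <;> ext z <;>
    simp only [Finset.mem_insert, Finset.mem_singleton] <;> omega

set_option maxHeartbeats 4000000 in
/-- if some one-entry deletion of the king `σ` has exactly one 2-block
and that 2-block is strict (not contained in a 3-block), then `σ` has a prince. -/
theorem strict_two_block_implies_prince (n : ℕ) (σ : Equiv.Perm (Fin (n + 2)))
    (hσ : IsKing σ) (i : Fin (n + 2)) (j : ℕ)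
    (hunique : ∀ j' : ℕ, HasTwoBlockAt (nabla σ i) j' ↔ j' = j)
    (hstrict : ∀ p : ℕ, (p = j ∨ p + 1 = j) → ¬ HasThreeBlockAt (nabla σ i) p) :
    ∃ τ : Equiv.Perm (Fin (n + 1)), IsKing τ ∧ StrictContains τ σ := by
  obtain ⟨hj, hd⟩ := (hunique j).2 rfl
  unfold fdist at hd
  rw [← pext_val, ← pext_val] at hd
  simp only at hd
  have E := pext_nabla σ i
  have three := no_three (nabla σ i)
  have bnd := pext_lt (nabla σ i)
  set P := pext (nabla σ i) with hP
  have hi := i.2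
  set I : ℕ := (i : ℕ) with hI
  have king := (isKing_iff σ).1 hσ
  have e1 := E j (by omega)
  have e2 := E (j+1) (by omega)
  have t1 : j + 2 < n + 1 → (P (j+2) : ℤ) ≠ 2 * P j - P (j+1) := by
    intro h h'
    rcases (by omega : P (j+1) = P j + 1 ∨ P j = P (j+1) + 1) with g | g
    · exact three j (hstrict j (Or.inl rfl)) h (P j - 1) (by omega)
    · exact three j (hstrict j (Or.inl rfl)) h (P (j+1)) (by omega)
  have t2 : ∀ a, a + 1 = j → (P a : ℤ) ≠ 2 * P (j+1) - P j := by
    intro a h h'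
    subst h
    simp only [Nat.add_assoc, Nat.reduceAdd] at *
    rcases (by omega : P (a+2) = P (a+1) + 1 ∨ P (a+1) = P (a+2) + 1) with g | g
    · exact three a (hstrict a (Or.inr rfl)) hj (P (a+1)) (by omega)
    · exact three a (hstrict a (Or.inr rfl)) hj (P a) (by omega)
  have e3 := fun h => E (j+2) h
  have e4 := fun a (h : a + 1 = j) => E a (by omega)
  by_cases hv : I = j + 1
  · -- vertical
    rw [if_pos (by omega)] at e1
    rw [if_neg (by omega)] at e2
    have k1 := king j (by omega)
    rw [hv] at e1 e2 e3 e4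
    have hs : (pext σ (j+2) : ℤ) - pext σ j = 1 ∨ (pext σ (j+2) : ℤ) - pext σ j = -1 := by
      split_ifs at e1 e2 <;> simp only [Nat.add_assoc, Nat.reduceAdd] at * <;> omega
    refine core_s11 σ hσ j (by omega) ((pext σ (j+2) : ℤ) - pext σ j) hs (by ring) ?_ ?_
    · intro h h'
      have e3 := e3 (by omega)
      have t1 := t1 (by omega)
      rw [if_neg (by omega)] at e3
      split_ifs at e1 e2 e3 <;> simp only [Nat.add_assoc, Nat.reduceAdd] at * <;> omega
    · intro a ha h'
      have e4 := e4 a ha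
      have t2 := t2 a ha
      rw [if_pos (by omega)] at e4
      split_ifs at e1 e2 e4 <;> simp only [Nat.add_assoc, Nat.reduceAdd] at * <;> omega
  · -- horizontal
    obtain ⟨q, hq, hqlt, hq1, hq2⟩ : ∃ q, q = (if j < I then j else j + 1) ∧ q + 1 < n + 2 ∧
        (if j + 1 < I then j + 1 else j + 1 + 1) = q + 1 ∧ q ≠ I := by
      refine ⟨_, rfl, ?_, ?_, ?_⟩ <;> split_ifs <;> omega
    rw [← hq] at e1
    rw [hq1] at e2
    have kq := king q hqlt
    set v := pext σ I with hv'
    have hvlt : v < n + 2 := pext_lt σ I hi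
    have hiv : pext σ⁻¹ v = I := pext_inv σ I hi
    have iq := pext_inv σ q (by omega)
    have iq1 := pext_inv σ (q+1) (by omega)
    have bq := pext_lt σ q (by omega)
    have bq1 := pext_lt σ (q+1) (by omega)
    have hinv : ∀ w < n + 2, pext σ (pext σ⁻¹ w) = w := by
      intro w hw
      simpa using pext_inv σ⁻¹ w hw
    have hblt : ∀ w < n + 2, pext σ⁻¹ w < n + 2 := fun w hw => pext_lt σ⁻¹ w hw
    have e3' : q + 2 < n + 2 → q + 2 ≠ I → (P (j+2) : ℤ) ≠ 2 * P j - P (j+1) ∧ pext σ (q+2) =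
        if P (j+2) < v then P (j+2) else P (j+2) + 1 := by
      intro h hne
      have hj2 : j + 2 < n + 1 := by split_ifs at hq <;> omega
      refine ⟨t1 hj2, ?_⟩
      rw [← e3 hj2]
      congr 1
      split_ifs at hq ⊢ <;> omega
    have e4' : ∀ a, a + 1 = q → a ≠ I → ∃ b, (P b : ℤ) ≠ 2 * P (j+1) - P j ∧
        pext σ a = if P b < v then P b else P b + 1 := by
      intro a ha hne
      have hj0 : j - 1 + 1 = j := by split_ifs at hq <;> omega
      refine ⟨j - 1, t2 _ hj0, ?_⟩
      rw [← e4 _ hj0]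
      congr 1
      split_ifs at hq ⊢ <;> omega
    suffices H : ∃ τ : Equiv.Perm (Fin (n + 1)), IsKing τ ∧ StrictContains τ σ⁻¹ by
      obtain ⟨τ, h1, h2, h3⟩ := H
      refine ⟨τ⁻¹, king_inv _ h1, ?_, h3⟩
      simpa using contains_inv _ _ h2
    have hcase : (pext σ q + 1 = v ∧ pext σ (q+1) = v + 1) ∨
        (pext σ (q+1) + 1 = v ∧ pext σ q = v + 1) := by
      split_ifs at e1 e2 <;> omega
    have n3 : ∀ w < n + 2, (w + 2 = v ∨ w = v + 2) → pext σ⁻¹ w = q + 2 →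
        (w:ℤ) ≠ 2 * pext σ q - v := by
      intro w hw hwv h h'
      have hw' := hinv w hw
      have hb := hblt w hw
      rw [h] at hw' hb
      have hne : q + 2 ≠ I := by
        intro hh; rw [hh] at hw'; omega
      obtain ⟨x, y⟩ := e3' hb hne
      split_ifs at e1 e2 y <;> omega
    have n4 : ∀ w < n + 2, (w + 2 = v ∨ w = v + 2) → pext σ⁻¹ w + 1 = q →
        (w:ℤ) ≠ 2 * pext σ (q+1) - v := by
      intro w hw hwv h h'
      have hw' := hinv w hw
      have hne : pext σ⁻¹ w ≠ I := by
        intro hh; rw [hh] at hw'; omega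
      obtain ⟨b, x, y⟩ := e4' _ h hne
      split_ifs at e1 e2 y <;> omega
    rcases hcase with ⟨c1, c2⟩ | ⟨c1, c2⟩
    · rw [c2] at iq1
      have c1' : v = pext σ q + 1 := c1.symm
      set u := pext σ q
      have iq1' : pext σ⁻¹ (u+2) = q + 1 := by rw [← iq1]; congr 1; omega
      refine core_s11 σ⁻¹ (king_inv _ hσ) u (by omega) 1 (Or.inl rfl) (by rw [iq, iq1']; push_cast; ring) ?_ ?_
      · intro h h'
        refine n4 (u+3) (by omega) (by omega) (by omega) (by omega)
      · intro a ha h'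
        refine n3 a (by omega) (by omega) (by omega) (by omega)
    · rw [c2] at iq
      set u := pext σ (q+1)
      have iq' : pext σ⁻¹ (u+2) = q := by rw [← iq]; congr 1; omega
      refine core_s11 σ⁻¹ (king_inv _ hσ) u (by omega) (-1) (Or.inr rfl) (by rw [iq', iq1]; push_cast; ring) ?_ ?_
      · intro h h'
        refine n3 (u+3) (by omega) (by omega) (by omega) (by omega)
      · intro a ha h'
        refine n4 a (by omega) (by omega) (by omega) (by omega)
end
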